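/- arXiv:1405.3375 — 2 statements merged into one kernel-verified Lean document; each statement's English description precedes it below -/
import Mathlib

section
/- An R-module M is Gorenstein weak injective if and only if there exists a short exact sequence 0 → L → I → M → 0 with I injective and L Gorenstein weak injective. -/
open CategoryTheory

universe u

noncomputable section

variable (R : Type u) [Ring R]

/-- Vanishing of `Ext^n_R(N, M)` for left `R`-modules, expressed via the `Ext` bifunctor
on the `ℤ`-linear abelian category `ModuleCat R`. -/
def ExtVanish (n : ℕ) (N M : ModuleCat.{u} R) : Prop :=
  Subsingleton (((_root_.Ext ℤ (ModuleCat.{u} R) n).obj (Opposite.op N)).obj M)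

/-- An `R`-module is super finitely presented if it admits a resolution by
finitely generated projective modules. -/
def SuperFinitelyPresented (N : ModuleCat.{u} R) : Prop :=
  ∃ (F : ℕ → ModuleCat.{u} R) (d : ∀ n, F (n + 1) →ₗ[R] F n) (ε : F 0 →ₗ[R] N),
    (∀ n, Module.Finite R (F n)) ∧ (∀ n, Module.Projective R (F n)) ∧
    Function.Surjective ε ∧ Function.Exact (d 0) ε ∧
    (∀ n, Function.Exact (d (n + 1)) (d n))

/-- An `R`-module `W` is weak injective if `Ext^1_R(N, W) = 0` for every super finitely
presented module `N`. -/
def WeakInjective (W : ModuleCat.{u} R) : Prop :=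
  ∀ N : ModuleCat.{u} R, SuperFinitelyPresented R N → ExtVanish R 1 N W

/-- `wid_R M ≤ n` : `Ext^{n+1}_R(N, M) = 0` for every super finitely presented `N`. -/
def WidLE (M : ModuleCat.{u} R) (n : ℕ) : Prop :=
  ∀ N : ModuleCat.{u} R, SuperFinitelyPresented R N → ExtVanish R (n + 1) N M

/-- The weak injective dimension, as an element of `ℕ∞`. -/
def Wid (M : ModuleCat.{u} R) : ℕ∞ :=
  sInf {c : ℕ∞ | ∃ n : ℕ, c = n ∧ WidLE R M n}

/-- A doubly infinite exact complex of injective modules which stays exact after applying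
`Hom_R(W, -)` for every module `W` in the test class `𝒯`. -/
def IsTotallyAcyclicInjComplex (𝒯 : ModuleCat.{u} R → Prop)
    (I : ℤ → ModuleCat.{u} R) (d : ∀ n : ℤ, I n →ₗ[R] I (n + 1)) : Prop :=
  (∀ n, Module.Injective R (I n)) ∧
  (∀ n, Function.Exact (d n) (d (n + 1))) ∧
  (∀ W : ModuleCat.{u} R, 𝒯 W → ∀ n,
    Function.Exact (fun g : W →ₗ[R] I n => (d n).comp g)
      (fun g : W →ₗ[R] I (n + 1) => (d (n + 1)).comp g))

/-- `M` is Gorenstein injective relative to the test class `𝒯` : `M` is the cokernel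
`Coker (I_1 → I_0)` of a `Hom(𝒯, -)`-exact exact complex of injective modules. -/
def GorensteinRelInjective (𝒯 : ModuleCat.{u} R → Prop) (M : ModuleCat.{u} R) : Prop :=
  ∃ (I : ℤ → ModuleCat.{u} R) (d : ∀ n : ℤ, I n →ₗ[R] I (n + 1)) (π : I 0 →ₗ[R] M),
    IsTotallyAcyclicInjComplex R 𝒯 I d ∧
    Function.Surjective π ∧ Function.Exact (d (-1)) π

/-- Gorenstein weak injective modules: the test class is that of weak injective modules. -/
def GorensteinWeakInjective (M : ModuleCat.{u} R) : Prop :=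
  GorensteinRelInjective R (WeakInjective R) M

/-- Gorenstein injective modules: the test class is that of injective modules. -/
def GorensteinInjective (M : ModuleCat.{u} R) : Prop :=
  GorensteinRelInjective R (fun E => Module.Injective R E) M

/-- The data of an exact sequence `0 → M → G^0 → ⋯ → G^n → 0` (the modules `G^i` for
`i > n` being trivial). -/
def IsFiniteCoresolution (M : ModuleCat.{u} R) (n : ℕ) (G : ℕ → ModuleCat.{u} R)
    (d : ∀ i, G i →ₗ[R] G (i + 1)) (ε : M →ₗ[R] G 0) : Prop :=
  Function.Injective ε ∧ Function.Exact ε (d 0) ∧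
  (∀ i, Function.Exact (d i) (d (i + 1))) ∧
  (∀ i, n < i → ∀ x : G i, x = 0)

/-- `Gwid_R M ≤ n` : `M` has a coresolution of length `n` by Gorenstein weak injective
modules. -/
def GwidLE (M : ModuleCat.{u} R) (n : ℕ) : Prop :=
  ∃ (G : ℕ → ModuleCat.{u} R) (d : ∀ i, G i →ₗ[R] G (i + 1)) (ε : M →ₗ[R] G 0),
    IsFiniteCoresolution R M n G d ε ∧ ∀ i, GorensteinWeakInjective R (G i)

/-- The Gorenstein weak injective dimension, as an element of `ℕ∞`. -/
def Gwid (M : ModuleCat.{u} R) : ℕ∞ :=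
  sInf {c : ℕ∞ | ∃ n : ℕ, c = n ∧ GwidLE R M n}

/-- `Gid_R M ≤ n`, via coresolutions by Gorenstein injective modules. -/
def GidLE (M : ModuleCat.{u} R) (n : ℕ) : Prop :=
  ∃ (G : ℕ → ModuleCat.{u} R) (d : ∀ i, G i →ₗ[R] G (i + 1)) (ε : M →ₗ[R] G 0),
    IsFiniteCoresolution R M n G d ε ∧ ∀ i, GorensteinInjective R (G i)

/-- The Gorenstein injective dimension, as an element of `ℕ∞`. -/
def Gid (M : ModuleCat.{u} R) : ℕ∞ :=
  sInf {c : ℕ∞ | ∃ n : ℕ, c = n ∧ GidLE R M n}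

/-- `id_R M ≤ n`, via coresolutions by injective modules. -/
def IdLE (M : ModuleCat.{u} R) (n : ℕ) : Prop :=
  ∃ (G : ℕ → ModuleCat.{u} R) (d : ∀ i, G i →ₗ[R] G (i + 1)) (ε : M →ₗ[R] G 0),
    IsFiniteCoresolution R M n G d ε ∧ ∀ i, Module.Injective R (G i)

/-- The injective dimension, as an element of `ℕ∞`. -/
def Idim (M : ModuleCat.{u} R) : ℕ∞ :=
  sInf {c : ℕ∞ | ∃ n : ℕ, c = n ∧ IdLE R M n}

/-- The data of an exact sequence `0 → P_n → ⋯ → P_0 → M → 0`. -/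
def IsFiniteResolution (M : ModuleCat.{u} R) (n : ℕ) (P : ℕ → ModuleCat.{u} R)
    (d : ∀ i, P (i + 1) →ₗ[R] P i) (ε : P 0 →ₗ[R] M) : Prop :=
  Function.Surjective ε ∧ Function.Exact (d 0) ε ∧
  (∀ i, Function.Exact (d (i + 1)) (d i)) ∧
  (∀ i, n < i → ∀ x : P i, x = 0)

/-- `pd_R M ≤ n`, via resolutions by projective modules. -/
def PdLE (M : ModuleCat.{u} R) (n : ℕ) : Prop :=
  ∃ (P : ℕ → ModuleCat.{u} R) (d : ∀ i, P (i + 1) →ₗ[R] P i) (ε : P 0 →ₗ[R] M),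
    IsFiniteResolution R M n P d ε ∧ ∀ i, Module.Projective R (P i)

end

variable (R : Type u) [Ring R]

/-- A short exact sequence `0 → L → M → N → 0` of `R`-modules. -/
def ShortExactSeq (L M N : ModuleCat.{u} R) (f : L →ₗ[R] M) (g : M →ₗ[R] N) : Prop :=
  Function.Injective f ∧ Function.Surjective g ∧ Function.Exact f g

/-- Exactness of `0 → Hom(C, X) → Hom(B, X) → Hom(A, X) → 0` induced by
`0 → A → B → C → 0`. -/
def HomContraExact (X : ModuleCat.{u} R) {A B C : ModuleCat.{u} R}
    (f : A →ₗ[R] B) (g : B →ₗ[R] C) : Prop :=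
  Function.Injective (fun h : C →ₗ[R] X => h.comp g) ∧
  Function.Exact (fun h : C →ₗ[R] X => h.comp g) (fun h : B →ₗ[R] X => h.comp f) ∧
  Function.Surjective (fun h : B →ₗ[R] X => h.comp f)

/-- A short exact sequence is `GWI`-copure exact if `Hom_R(-, X)` leaves it exact for
every Gorenstein weak injective module `X`. -/
def GWICopureExact {A B C : ModuleCat.{u} R} (f : A →ₗ[R] B) (g : B →ₗ[R] C) : Prop :=
  ShortExactSeq R A B C f g ∧
  ∀ X : ModuleCat.{u} R, GorensteinWeakInjective R X → HomContraExact R X f g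

/-- `M` is `GWI`-copure injective if `Hom_R(-, M)` is exact on every `GWI`-copure exact
sequence. -/
def GWICopureInjectiveMod (M : ModuleCat.{u} R) : Prop :=
  ∀ (A B C : ModuleCat.{u} R) (f : A →ₗ[R] B) (g : B →ₗ[R] C),
    GWICopureExact R f g → HomContraExact R M f g

/-- `φ : M → G` is a Gorenstein weak injective preenvelope of `M`. -/
def GWIPreenvelope (M G : ModuleCat.{u} R) (φ : M →ₗ[R] G) : Prop :=
  GorensteinWeakInjective R G ∧
  ∀ G' : ModuleCat.{u} R, GorensteinWeakInjective R G' →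
    ∀ f : M →ₗ[R] G', ∃ g : G →ₗ[R] G', g.comp φ = f

/-- A `WI`-pure Tate injective resolution of `M` : an injective resolution
`0 → M → E^0 → E^1 → ⋯`, a `WI`-pure exact complex `T` of injectives, and a chain map
`u : E → T` which is an isomorphism in all sufficiently large degrees. -/
def WIPureTateInjectiveResolution (M : ModuleCat.{u} R)
    (E : ℕ → ModuleCat.{u} R) (dE : ∀ n, E n →ₗ[R] E (n + 1)) (ε : M →ₗ[R] E 0)
    (T : ℤ → ModuleCat.{u} R) (dT : ∀ n : ℤ, T n →ₗ[R] T (n + 1))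
    (u : ∀ n : ℕ, E n →ₗ[R] T n) : Prop :=
  (∀ n, Module.Injective R (E n)) ∧ Function.Injective ε ∧
  Function.Exact ε (dE 0) ∧ (∀ n, Function.Exact (dE n) (dE (n + 1))) ∧
  IsTotallyAcyclicInjComplex R (WeakInjective R) T dT ∧
  (∀ n : ℕ, (dT n).comp (u n) = (u (n + 1)).comp (dE n)) ∧
  ∃ N : ℕ, ∀ n, N ≤ n → Function.Bijective (u n)

/-- Vanishing of the relative Tate cohomology `Êxt^i_GWI(N, M)` for all `i ∈ ℤ`,
computed from the `WI`-pure exact complex `T` : the complex `Hom_R(N, T)` is exact. -/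
def ExtHatVanishesAll (N : ModuleCat.{u} R) (T : ℤ → ModuleCat.{u} R)
    (dT : ∀ n : ℤ, T n →ₗ[R] T (n + 1)) : Prop :=
  ∀ n : ℤ, Function.Exact (fun g : N →ₗ[R] T n => (dT n).comp g)
    (fun g : N →ₗ[R] T (n + 1) => (dT (n + 1)).comp g)

/-!
Cutting a complex of injectives at its images turns Gorenstein injectivity of `M` into the
existence of two infinite chains of `Hom(𝒯, -)`-exact sequences `0 → N → I → K → 0` with `I`
injective, one descending from `M` and one ascending from `M`. The forward implication moves one
such sequence from the descending to the ascending chain.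

Conversely, given `0 → L → I → M → 0` with `L` Gorenstein injective, compare it with the first
sequence `0 → L → E → K → 0` of the ascending chain of `L`. Schanuel's lemma gives
`M × E ≃ K × I`, which transports both `Hom(𝒯, -)`-exactness and, because injective summands can be
added and cancelled, the existence of an ascending chain from `K` to `M`.
-/

/-- There is an infinite chain `x = a 0, a 1, …` with consecutive terms related by `r`. -/
def HasChainFrom {α : Type*} (r : α → α → Prop) (x : α) : Prop :=
  ∃ a : ℕ → α, a 0 = x ∧ ∀ n, r (a n) (a (n + 1))

theorem hasChainFrom_iff {α : Type*} {r : α → α → Prop} {x : α} :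
    HasChainFrom r x ↔ ∃ y, r x y ∧ HasChainFrom r y := by
  constructor
  · rintro ⟨a, rfl, ha⟩
    exact ⟨a 1, ha 0, fun n => a (n + 1), rfl, fun n => ha (n + 1)⟩
  · rintro ⟨_, hxy, a, rfl, ha⟩
    refine ⟨fun n => Nat.casesOn n x a, rfl, ?_⟩
    rintro (_ | n)
    exacts [hxy, ha n]

theorem exists_int_chain_iff {α : Type*} {r : α → α → Prop} {x : α} (m : ℤ) :
    (∃ a : ℤ → α, a m = x ∧ ∀ n, r (a n) (a (n + 1))) ↔
      HasChainFrom (flip r) x ∧ HasChainFrom r x := by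
  constructor
  · rintro ⟨a, rfl, ha⟩
    refine ⟨⟨fun n => a (m - n), by simp, fun n => ?_⟩, ⟨fun n => a (m + n), by simp, fun n => ?_⟩⟩
    · have h_succ : m - (n + 1 : ℕ) + 1 = m - n := by lia
      simpa only [flip, h_succ] using ha (m - (n + 1 : ℕ))
    · simpa only [Nat.cast_succ, add_assoc] using ha (m + n)
  · rintro ⟨⟨b, hb0, hb⟩, a, ha0, ha⟩
    let c : ℤ → α
      | .ofNat n => a n
      | .negSucc n => b (n + 1)
    have hc : ∀ n, r (c n) (c (n + 1))
      | .ofNat n => ha n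
      | .negSucc 0 => by
        change r (b 1) (a 0)
        rw [ha0, ← hb0]
        exact hb 0
      | .negSucc (n + 1) => hb (n + 1)
    refine ⟨fun n => c (n - m), ?_, fun n => ?_⟩
    · simpa only [sub_self] using ha0
    · simpa only [sub_add_eq_add_sub] using hc (n - m)

section

variable {R}

section LinearMaps

variable {A B C C' : Type*} [AddCommGroup A] [AddCommGroup B] [AddCommGroup C] [AddCommGroup C']
  [Module R A] [Module R B] [Module R C] [Module R C']

theorem exists_linearEquiv_of_exact {f : A →ₗ[R] B} {p : B →ₗ[R] C} {p' : B →ₗ[R] C'}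
    (hfp : Function.Exact f p) (hp : Function.Surjective p)
    (hfp' : Function.Exact f p') (hp' : Function.Surjective p') :
    ∃ e : C ≃ₗ[R] C', ∀ b, e (p b) = p' b :=
  ⟨(hfp.linearEquivOfSurjective hp).symm.trans (hfp'.linearEquivOfSurjective hp'),
    fun b => by
      rw [LinearEquiv.trans_apply, hfp.linearEquivOfSurjective_symm_apply]
      rfl⟩

theorem exists_comp_eq_of_exact {W : Type*} [AddCommGroup W] [Module R W] {f : A →ₗ[R] B}
    {g : B →ₗ[R] C} (hf : Function.Injective f) (hfg : Function.Exact f g) {h : W →ₗ[R] B}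
    (hgh : g.comp h = 0) : ∃ k : W →ₗ[R] A, f.comp k = h := by
  let h' : W →ₗ[R] LinearMap.range f :=
    h.codRestrict _ fun w => (hfg (h w)).1 (LinearMap.congr_fun hgh w)
  let e : A ≃ₗ[R] LinearMap.range f := LinearEquiv.ofInjective f hf
  exact ⟨e.symm.toLinearMap.comp h', LinearMap.ext fun w =>
    congrArg Subtype.val (e.apply_symm_apply (h' w))⟩

theorem exact_prod_sub {E : Type*} [AddCommGroup E] [Module R E] {f : A →ₗ[R] B} {g : B →ₗ[R] C}
    {ι : A →ₗ[R] E} {β : B →ₗ[R] E} (hfg : Function.Exact f g) (hβ : ∀ a, β (f a) = ι a) :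
    Function.Exact (f.prod ι) ((g.prod β).coprod (-LinearMap.inr R C E)) := by
  rintro ⟨x, y⟩
  have h_ker : (g.prod β).coprod (-LinearMap.inr R C E) (x, y) = 0 ↔ g x = 0 ∧ β x = y := by
    simp [Prod.ext_iff, add_neg_eq_zero]
  rw [h_ker, hfg x]
  constructor
  · rintro ⟨⟨a, rfl⟩, rfl⟩
    exact ⟨a, Prod.ext rfl (hβ a).symm⟩
  · rintro ⟨a, ha⟩
    obtain ⟨rfl, rfl⟩ := Prod.ext_iff.1 ha
    exact ⟨⟨a, rfl⟩, hβ a⟩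

theorem surjective_prod_sub {E : Type*} [AddCommGroup E] [Module R E] {g : B →ₗ[R] C}
    (hg : Function.Surjective g) (β : B →ₗ[R] E) :
    Function.Surjective ((g.prod β).coprod (-LinearMap.inr R C E)) := by
  rintro ⟨c, y⟩
  obtain ⟨x, rfl⟩ := hg c
  exact ⟨(x, β x - y), by simp⟩

end LinearMaps

theorem injective_prod {A B : Type u} [AddCommGroup A] [AddCommGroup B] [Module R A] [Module R B]
    (hA : Module.Injective R A) (hB : Module.Injective R B) : Module.Injective R (A × B) where
  out X Y _ _ _ _ u hu h := by
    obtain ⟨a, ha⟩ := hA.out u hu ((LinearMap.fst R A B).comp h)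
    obtain ⟨b, hb⟩ := hB.out u hu ((LinearMap.snd R A B).comp h)
    exact ⟨a.prod b, fun x => Prod.ext (ha x) (hb x)⟩

/-- Schanuel's lemma: both products are the pushout of `f` and `ι`. -/
theorem ShortExactSeq.exists_prod_linearEquiv_prod {L I M E K : ModuleCat.{u} R} {f : L →ₗ[R] I}
    {g : I →ₗ[R] M} {ι : L →ₗ[R] E} {q : E →ₗ[R] K} (hfg : ShortExactSeq R L I M f g)
    (hιq : ShortExactSeq R L E K ι q) (hI : Module.Injective R I) (hE : Module.Injective R E) :
    ∃ (α : E →ₗ[R] I) (β : I →ₗ[R] E) (e : (M × E) ≃ₗ[R] (K × I)),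
      ∀ x y, e (g x, β x - y) = (q y, α y - x) := by
  obtain ⟨β, hβ⟩ := hE.out f hfg.1 ι
  obtain ⟨α, hα⟩ := hI.out ι hιq.1 f
  let swap : (I × E) ≃ₗ[R] (E × I) := LinearEquiv.prodComm R I E
  have h_exact : Function.Exact (f.prod ι)
      (((q.prod α).coprod (-LinearMap.inr R K I)).comp swap.toLinearMap) := fun ⟨x, y⟩ =>
    (exact_prod_sub hιq.2.2 hα (y, x)).trans (by simp [Prod.ext_iff, and_comm])
  obtain ⟨e, he⟩ := exists_linearEquiv_of_exact (exact_prod_sub hfg.2.2 hβ)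
    (surjective_prod_sub hfg.2.1 β) h_exact ((surjective_prod_sub hιq.2.1 α).comp swap.surjective)
  exact ⟨α, β, e, fun x y => by simpa [swap, sub_eq_add_neg] using he (x, y)⟩

/-- `K` is a first cosyzygy of `N` in a `Hom(𝒯, -)`-exact injective coresolution: there is a short
exact sequence `0 → N → I → K → 0` with `I` injective which stays exact under `Hom(W, -)` for `W`
in `𝒯`. As `Hom(W, -)` is left exact, this is only required at its last term. -/
def IsCosyzygy (𝒯 : ModuleCat.{u} R → Prop) (N K : ModuleCat.{u} R) : Prop :=
  ∃ (I : ModuleCat.{u} R) (f : N →ₗ[R] I) (g : I →ₗ[R] K),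
    ShortExactSeq R N I K f g ∧ Module.Injective R I ∧
    ∀ W : ModuleCat.{u} R, 𝒯 W → Function.Surjective (fun h : W →ₗ[R] I => g.comp h)

/-- `M` has a `Hom(𝒯, -)`-exact resolution `⋯ → I₁ → I₀ → M → 0` by injective modules, encoded by
its chain of syzygies. -/
def HasProperInjResolution (𝒯 : ModuleCat.{u} R → Prop) : ModuleCat.{u} R → Prop :=
  HasChainFrom (flip (IsCosyzygy 𝒯))

/-- `M` has a `Hom(𝒯, -)`-exact injective coresolution `0 → M → I⁰ → I¹ → ⋯`, encoded by its chain
of cosyzygies. -/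
def HasProperInjCoresolution (𝒯 : ModuleCat.{u} R → Prop) : ModuleCat.{u} R → Prop :=
  HasChainFrom (IsCosyzygy 𝒯)

variable {𝒯 : ModuleCat.{u} R → Prop} {L I E K M N : ModuleCat.{u} R}

theorem hasProperInjResolution_iff :
    HasProperInjResolution 𝒯 M ↔ ∃ L, IsCosyzygy 𝒯 L M ∧ HasProperInjResolution 𝒯 L :=
  hasChainFrom_iff

theorem hasProperInjCoresolution_iff :
    HasProperInjCoresolution 𝒯 M ↔ ∃ K, IsCosyzygy 𝒯 M K ∧ HasProperInjCoresolution 𝒯 K :=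
  hasChainFrom_iff

namespace IsCosyzygy

theorem congr_left (h : IsCosyzygy 𝒯 N K) (e : M ≃ₗ[R] N) : IsCosyzygy 𝒯 M K := by
  obtain ⟨I, f, g, ⟨hf, hg, hfg⟩, hI, hlift⟩ := h
  exact ⟨I, f.comp e.toLinearMap, g,
    ⟨hf.comp e.injective, hg, e.precomp_exact_iff_exact.2 hfg⟩, hI, hlift⟩

theorem congr_right (h : IsCosyzygy 𝒯 N K) (e : K ≃ₗ[R] M) : IsCosyzygy 𝒯 N M := by
  obtain ⟨I, f, g, ⟨hf, hg, hfg⟩, hI, hlift⟩ := h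
  refine ⟨I, f, e.toLinearMap.comp g,
    ⟨hf, e.surjective.comp hg, e.postcomp_exact_iff_exact.2 hfg⟩, hI, fun W hW h => ?_⟩
  obtain ⟨k, hk⟩ := hlift W hW (e.symm.toLinearMap.comp h)
  exact ⟨k, LinearMap.ext fun w => e.eq_symm_apply.1 (LinearMap.congr_fun hk w)⟩

theorem prod_injective (h : IsCosyzygy 𝒯 N K) (hE : Module.Injective R E) :
    IsCosyzygy 𝒯 (ModuleCat.of R (N × E)) K := by
  obtain ⟨I, f, g, ⟨hf, hg, hfg⟩, hI, hlift⟩ := h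
  refine ⟨ModuleCat.of R (I × E), f.prodMap LinearMap.id, g.comp (LinearMap.fst R I E),
    ⟨hf.prodMap Function.injective_id, hg.comp Prod.fst_surjective, ?_⟩, injective_prod hI hE,
    fun W hW h => ?_⟩
  · rintro ⟨x, y⟩
    exact (hfg x).trans (by simp)
  · obtain ⟨k, hk⟩ := hlift W hW h
    exact ⟨k.prod 0, hk⟩

theorem of_prod_injective (h : IsCosyzygy 𝒯 (ModuleCat.of R (N × E)) K)
    (hE : Module.Injective R E) : IsCosyzygy 𝒯 N (ModuleCat.of R (K × E)) := by
  obtain ⟨I, f, g, ⟨hf, hg, hfg⟩, hI, hlift⟩ := h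
  obtain ⟨ρ, hρ⟩ := hE.out f hf (LinearMap.snd R N E)
  let j : E →ₗ[R] I := f.comp (LinearMap.inr R N E)
  have hgj (y : E) : g (j y) = 0 := hfg.apply_apply_eq_zero _
  have hρj (y : E) : ρ (j y) = y := hρ (0, y)
  refine ⟨I, f.comp (LinearMap.inl R N E), g.prod ρ,
    ⟨hf.comp LinearMap.inl_injective, ?_, fun x => ⟨fun hx => ?_, ?_⟩⟩, hI, fun W hW h => ?_⟩
  · rintro ⟨c, y⟩
    obtain ⟨x, rfl⟩ := hg c
    exact ⟨x + j (y - ρ x), by simp [hgj, hρj]⟩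
  · obtain ⟨hgx, hρx⟩ := Prod.ext_iff.1 hx
    obtain ⟨⟨n, y⟩, rfl⟩ := (hfg x).1 hgx
    obtain rfl : y = 0 := (hρ (n, y)).symm.trans hρx
    exact ⟨n, rfl⟩
  · rintro ⟨n, rfl⟩
    exact Prod.ext (hfg.apply_apply_eq_zero _) (hρ (n, 0))
  · obtain ⟨k, hk⟩ := hlift W hW ((LinearMap.fst R K E).comp h)
    have hgk (w : W) : g (k w) = (h w).1 := LinearMap.congr_fun hk w
    refine ⟨k + j.comp ((LinearMap.snd R K E).comp h - ρ.comp k), LinearMap.ext fun w => ?_⟩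
    exact Prod.ext (by simp [hgj, hgk]) (by simp [hρj])

theorem of_shortExactSeq {f : L →ₗ[R] I} {g : I →ₗ[R] M} (hK : IsCosyzygy 𝒯 L K)
    (hfg : ShortExactSeq R L I M f g) (hI : Module.Injective R I) : IsCosyzygy 𝒯 L M := by
  obtain ⟨E, ι, q, hιq, hE, hlift⟩ := hK
  obtain ⟨α, β, e, he⟩ := hfg.exists_prod_linearEquiv_prod hιq hI hE
  refine ⟨I, f, g, hfg, hI, fun W hW h => ?_⟩
  let c : W →ₗ[R] K × I := e.toLinearMap.comp ((LinearMap.inl R M E).comp h)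
  obtain ⟨k, hk⟩ := hlift W hW ((LinearMap.fst R K I).comp c)
  let l : W →ₗ[R] I := α.comp k - (LinearMap.snd R K I).comp c
  refine ⟨l, LinearMap.ext fun w => ?_⟩
  have h_image : e (g (l w), β (l w) - k w) = e (h w, 0) := by
    rw [he]
    exact Prod.ext (LinearMap.congr_fun hk w) (sub_sub_cancel _ _)
  exact congrArg Prod.fst (e.injective h_image)

end IsCosyzygy

theorem HasProperInjResolution.congr (h : HasProperInjResolution 𝒯 M) (e : M ≃ₗ[R] N) :
    HasProperInjResolution 𝒯 N :=
  have ⟨L, hL, hres⟩ := hasProperInjResolution_iff.1 h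
  hasProperInjResolution_iff.2 ⟨L, hL.congr_right e, hres⟩

namespace HasProperInjCoresolution

theorem congr (h : HasProperInjCoresolution 𝒯 M) (e : N ≃ₗ[R] M) :
    HasProperInjCoresolution 𝒯 N :=
  have ⟨K, hK, hcores⟩ := hasProperInjCoresolution_iff.1 h
  hasProperInjCoresolution_iff.2 ⟨K, hK.congr_left e, hcores⟩

theorem prod_injective (h : HasProperInjCoresolution 𝒯 M) (hE : Module.Injective R E) :
    HasProperInjCoresolution 𝒯 (ModuleCat.of R (M × E)) :=
  have ⟨K, hK, hcores⟩ := hasProperInjCoresolution_iff.1 h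
  hasProperInjCoresolution_iff.2 ⟨K, hK.prod_injective hE, hcores⟩

theorem of_prod_injective (h : HasProperInjCoresolution 𝒯 (ModuleCat.of R (M × E)))
    (hE : Module.Injective R E) : HasProperInjCoresolution 𝒯 M :=
  have ⟨K, hK, hcores⟩ := hasProperInjCoresolution_iff.1 h
  hasProperInjCoresolution_iff.2
    ⟨ModuleCat.of R (K × E), hK.of_prod_injective hE, hcores.prod_injective hE⟩

theorem of_shortExactSeq {f : L →ₗ[R] I} {g : I →ₗ[R] M} (h : HasProperInjCoresolution 𝒯 L)
    (hfg : ShortExactSeq R L I M f g) (hI : Module.Injective R I) :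
    HasProperInjCoresolution 𝒯 M := by
  obtain ⟨K, ⟨E, ι, q, hιq, hE, -⟩, hK⟩ := hasProperInjCoresolution_iff.1 h
  obtain ⟨-, -, e, -⟩ := hfg.exists_prod_linearEquiv_prod hιq hI hE
  have h_prod : HasProperInjCoresolution 𝒯 (ModuleCat.of R (M × E)) :=
    (hK.prod_injective hI).congr e
  exact h_prod.of_prod_injective hE

end HasProperInjCoresolution

theorem IsTotallyAcyclicInjComplex.isCosyzygy_range {I : ℤ → ModuleCat.{u} R}
    {d : ∀ n : ℤ, I n →ₗ[R] I (n + 1)} (h : IsTotallyAcyclicInjComplex R 𝒯 I d) (n : ℤ) :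
    IsCosyzygy 𝒯 (ModuleCat.of R (LinearMap.range (d n)))
      (ModuleCat.of R (LinearMap.range (d (n + 1)))) := by
  obtain ⟨hI, hd, hW⟩ := h
  refine ⟨I (n + 1), (LinearMap.range (d n)).subtype, (d (n + 1)).rangeRestrict,
    ⟨Submodule.subtype_injective _, LinearMap.surjective_rangeRestrict _,
      (hd n).linearMap_rangeRestrict⟩, hI _, fun W hT h => ?_⟩
  obtain ⟨k, hk⟩ := (hW W hT (n + 1) ((LinearMap.range (d (n + 1))).subtype.comp h)).1
    (LinearMap.ext fun w => (hd (n + 1) (h w)).2 (h w).2)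
  exact ⟨k, LinearMap.ext fun w => Subtype.ext (LinearMap.congr_fun hk w)⟩

theorem gorensteinRelInjective_of_isCosyzygy {K : ℤ → ModuleCat.{u} R}
    (hK : ∀ n, IsCosyzygy 𝒯 (K n) (K (n + 1))) : GorensteinRelInjective R 𝒯 (K 1) := by
  choose I ι p hιp hI hlift using hK
  let d (n : ℤ) : I n →ₗ[R] I (n + 1) := (ι (n + 1)).comp (p n)
  have hdp (n : ℤ) : Function.Exact (d n) (p (n + 1)) :=
    (hιp n).2.1.comp_exact_iff_exact.2 (hιp (n + 1)).2.2
  have hd (n : ℤ) : Function.Exact (d n) (d (n + 1)) :=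
    (hιp (n + 1 + 1)).1.comp_exact_iff_exact.2 (hdp n)
  refine ⟨I, d, p 0, ⟨hI, hd, fun W hW n h => ⟨fun hh => ?_, ?_⟩⟩, (hιp 0).2.1, hdp (-1)⟩
  · have hph : (p (n + 1)).comp h = 0 :=
      LinearMap.ext fun w => (hιp (n + 1 + 1)).1 <|
        (LinearMap.congr_fun hh w).trans (map_zero _).symm
    obtain ⟨k, rfl⟩ := exists_comp_eq_of_exact (hιp (n + 1)).1 (hιp (n + 1)).2.2 hph
    obtain ⟨l, rfl⟩ := hlift n W hW k
    exact ⟨l, rfl⟩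
  · rintro ⟨l, rfl⟩
    exact LinearMap.ext fun w => (hd n).apply_apply_eq_zero (l w)

theorem gorensteinRelInjective_iff :
    GorensteinRelInjective R 𝒯 M ↔
      HasProperInjResolution 𝒯 M ∧ HasProperInjCoresolution 𝒯 M := by
  constructor
  · rintro ⟨I, d, π, h, hπ, hdπ⟩
    obtain ⟨hres, hcores⟩ := (exists_int_chain_iff (r := IsCosyzygy 𝒯) 0).1
      ⟨fun n => ModuleCat.of R (LinearMap.range (d n)), rfl, h.isCosyzygy_range⟩
    have h_exact : Function.Exact (d (-1)) (d 0).rangeRestrict :=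
      (LinearMap.range (d 0)).subtype_injective.comp_exact_iff_exact.1 (h.2.1 (-1))
    obtain ⟨e, -⟩ := exists_linearEquiv_of_exact h_exact (d 0).surjective_rangeRestrict hdπ hπ
    exact ⟨HasProperInjResolution.congr hres e, HasProperInjCoresolution.congr hcores e.symm⟩
  · intro h
    obtain ⟨K, rfl, hK⟩ := (exists_int_chain_iff 1).2 h
    exact gorensteinRelInjective_of_isCosyzygy hK

end

theorem gorensteinWeakInjective_iff_exists_ses_general (𝒯 : ModuleCat.{u} R → Prop)
    (M : ModuleCat.{u} R) :
    GorensteinRelInjective R 𝒯 M ↔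
      ∃ (L I : ModuleCat.{u} R) (f : L →ₗ[R] I) (g : I →ₗ[R] M),
        ShortExactSeq R L I M f g ∧ Module.Injective R I ∧ GorensteinRelInjective R 𝒯 L := by
  simp only [gorensteinRelInjective_iff]
  constructor
  · rintro ⟨hres, hcores⟩
    obtain ⟨L, hL, hresL⟩ := hasProperInjResolution_iff.1 hres
    have hcoresL : HasProperInjCoresolution 𝒯 L := hasProperInjCoresolution_iff.2 ⟨M, hL, hcores⟩
    obtain ⟨I, f, g, hfg, hI, -⟩ := hL
    exact ⟨L, I, f, g, hfg, hI, hresL, hcoresL⟩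
  · rintro ⟨L, I, f, g, hfg, hI, hresL, hcoresL⟩
    obtain ⟨K, hK, -⟩ := hasProperInjCoresolution_iff.1 hcoresL
    have hM : IsCosyzygy 𝒯 L M := hK.of_shortExactSeq hfg hI
    exact ⟨hasProperInjResolution_iff.2 ⟨L, hM, hresL⟩, hcoresL.of_shortExactSeq hfg hI⟩

/-- `M` is Gorenstein weak injective iff there is a short exact sequence
`0 → L → I → M → 0` with `I` injective and `L` Gorenstein weak injective. -/
theorem gorensteinWeakInjective_iff_exists_ses (M : ModuleCat.{u} R) :
    GorensteinWeakInjective R M ↔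
      ∃ (L I : ModuleCat.{u} R) (f : L →ₗ[R] I) (g : I →ₗ[R] M),
        ShortExactSeq R L I M f g ∧ Module.Injective R I ∧
        GorensteinWeakInjective R L :=
  gorensteinWeakInjective_iff_exists_ses_general R (WeakInjective R) M
end

section
/- The class of Gorenstein weak injective R-modules is closed under direct summands. -/
open CategoryTheory

universe u

variable (R : Type u) [Ring R]

/-! If every member of a class of modules has a syzygy and a cosyzygy in the class, along `𝒯`-exact
sequences with injective middle term, then splicing these sequences shows that its members are
Gorenstein injective relative to `𝒯`. Products and, by the horseshoe lemma, extensions of Gorenstein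
injectives form such classes.

Now let `M = B ⊕ A` be Gorenstein injective and `N = M^ℕ`. The Eilenberg swindle gives
`N ≃ N ⊕ A`, so there are `𝒯`-exact sequences `0 → K → E → N ⊕ A → 0` and `0 → N ⊕ A → E' → L → 0`
with `K`, `L` Gorenstein injective. The kernel of `E → N ⊕ A → A` is an extension of `N` by `K`, and
the cokernel of `A → N ⊕ A → E'` is an extension of `L` by `N`. Both are therefore Gorenstein
injective, and they are a syzygy and a cosyzygy of `A`. -/

section RelativeHomologicalAlgebra

variable {R} {𝒯 : ModuleCat.{u} R → Prop}
variable {A B C E K L P X Y Z : Type*}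
  [AddCommGroup A] [AddCommGroup B] [AddCommGroup C] [AddCommGroup E] [AddCommGroup K]
  [AddCommGroup L] [AddCommGroup P] [AddCommGroup X] [AddCommGroup Y] [AddCommGroup Z]
  [Module R A] [Module R B] [Module R C] [Module R E] [Module R K]
  [Module R L] [Module R P] [Module R X] [Module R Y] [Module R Z]

/-- Relative epimorphisms: every map to `Z` from a module of the test class `𝒯` factors through
`q`. Projective modules are added to `𝒯`, which makes relative epimorphisms surjective without
changing the lifting condition on surjective maps. -/
def RelEpi (𝒯 : ModuleCat.{u} R → Prop) (q : Y →ₗ[R] Z) : Prop :=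
  ∀ W : ModuleCat.{u} R, 𝒯 W ∨ Module.Projective R W →
    ∀ g : W →ₗ[R] Z, ∃ h : W →ₗ[R] Y, q ∘ₗ h = g

namespace RelEpi

theorem surjective {q : Y →ₗ[R] Z} (hq : RelEpi 𝒯 q) : Function.Surjective q := fun z => by
  obtain ⟨h, hh⟩ := hq (ModuleCat.of R R) (.inr (inferInstanceAs (Module.Projective R R)))
    (LinearMap.toSpanSingleton R Z z)
  exact ⟨h (1 : R), (LinearMap.congr_fun hh (1 : R)).trans (one_smul R z)⟩

theorem of_comp {f : X →ₗ[R] Y} {q : Y →ₗ[R] Z} (h : RelEpi 𝒯 (q ∘ₗ f)) : RelEpi 𝒯 q :=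
  fun W hW g => (h W hW g).imp' (f ∘ₗ ·) fun _ hk => hk

theorem of_rightInverse {q : Y →ₗ[R] Z} {s : Z →ₗ[R] Y} (hs : q ∘ₗ s = LinearMap.id) :
    RelEpi 𝒯 q :=
  fun _ _ g => ⟨s ∘ₗ g, by rw [← LinearMap.comp_assoc, hs, LinearMap.id_comp]⟩

theorem comp {f : X →ₗ[R] Y} {q : Y →ₗ[R] Z} (hq : RelEpi 𝒯 q) (hf : RelEpi 𝒯 f) :
    RelEpi 𝒯 (q ∘ₗ f) := fun W hW g => by
  obtain ⟨h, rfl⟩ := hq W hW g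
  obtain ⟨k, rfl⟩ := hf W hW h
  exact ⟨k, rfl⟩

end RelEpi

/-- Short exact sequences `0 → X → Y → Z → 0` that stay exact under `Hom_R(W, -)` for every `W`
in `𝒯`; they are the conflations of the exact structure used throughout. -/
structure RelShortExact (𝒯 : ModuleCat.{u} R → Prop) (j : X →ₗ[R] Y) (q : Y →ₗ[R] Z) : Prop where
  injective : Function.Injective j
  exact : Function.Exact j q
  relEpi : RelEpi 𝒯 q

namespace RelShortExact

theorem exists_lift {j : X →ₗ[R] Y} {q : Y →ₗ[R] Z} (h : RelShortExact 𝒯 j q) (g : A →ₗ[R] Y)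
    (hg : q ∘ₗ g = 0) : ∃ k : A →ₗ[R] X, j ∘ₗ k = g :=
  ⟨(LinearEquiv.ofInjective j h.injective).symm.toLinearMap ∘ₗ
      g.codRestrict (LinearMap.range j) fun a => (h.exact _).1 (LinearMap.congr_fun hg a),
    LinearMap.ext fun _ => congrArg Subtype.val
      ((LinearEquiv.ofInjective j h.injective).apply_symm_apply _)⟩

theorem exists_desc {j : X →ₗ[R] Y} {q : Y →ₗ[R] Z} (h : RelShortExact 𝒯 j q) (g : Y →ₗ[R] A)
    (hg : g ∘ₗ j = 0) : ∃ k : Z →ₗ[R] A, k ∘ₗ q = g := by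
  let e := h.exact.linearEquivOfSurjective h.relEpi.surjective
  refine ⟨(LinearMap.range j).liftQ g (LinearMap.range_le_ker_iff.2 hg) ∘ₗ e.symm, ?_⟩
  ext y
  have hy : e.symm (q y) = (LinearMap.range j).mkQ y := e.symm_apply_eq.2 rfl
  simp [hy]

theorem ker {q : Y →ₗ[R] Z} (hq : RelEpi 𝒯 q) : RelShortExact 𝒯 (LinearMap.ker q).subtype q :=
  ⟨Subtype.val_injective, q.exact_subtype_ker_map, hq⟩

theorem inl_snd : RelShortExact 𝒯 (LinearMap.inl R X Y) (LinearMap.snd R X Y) :=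
  ⟨LinearMap.inl_injective, .inl_snd, .of_rightInverse (LinearMap.snd_comp_inr R X Y)⟩

theorem inr_fst : RelShortExact 𝒯 (LinearMap.inr R X Y) (LinearMap.fst R X Y) :=
  ⟨LinearMap.inr_injective, .inr_fst, .of_rightInverse (LinearMap.fst_comp_inl R X Y)⟩

theorem comp_equiv {j : X →ₗ[R] Y} {q : Y →ₗ[R] Z} (h : RelShortExact 𝒯 j q) (e : A ≃ₗ[R] X) :
    RelShortExact 𝒯 (j ∘ₗ e.toLinearMap) q :=
  ⟨h.injective.comp e.injective, LinearEquiv.precomp_exact_iff_exact.2 h.exact, h.relEpi⟩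

theorem equiv_comp {j : X →ₗ[R] Y} {q : Y →ₗ[R] Z} (h : RelShortExact 𝒯 j q) (e : Z ≃ₗ[R] A) :
    RelShortExact 𝒯 j (e.toLinearMap ∘ₗ q) :=
  ⟨h.injective, LinearEquiv.postcomp_exact_iff_exact.2 h.exact,
    (RelEpi.of_rightInverse e.comp_symm).comp h.relEpi⟩

theorem pi {ι : Type*} {X Y Z : ι → Type*} [∀ n, AddCommGroup (X n)] [∀ n, AddCommGroup (Y n)]
    [∀ n, AddCommGroup (Z n)] [∀ n, Module R (X n)] [∀ n, Module R (Y n)] [∀ n, Module R (Z n)]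
    {j : ∀ n, X n →ₗ[R] Y n} {q : ∀ n, Y n →ₗ[R] Z n} (h : ∀ n, RelShortExact 𝒯 (j n) (q n)) :
    RelShortExact 𝒯 (LinearMap.piMap j) (LinearMap.piMap q) where
  injective := Function.Injective.piMap fun n => (h n).injective
  exact y := by
    refine ⟨fun hy => ?_, ?_⟩
    · choose x hx using fun n => ((h n).exact (y n)).1 (congrFun hy n)
      exact ⟨x, funext hx⟩
    · rintro ⟨x, rfl⟩
      exact funext fun n => (h n).exact.apply_apply_eq_zero (x n)
  relEpi W hW g := by
    choose k hk using fun n => (h n).relEpi W hW (LinearMap.proj n ∘ₗ g)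
    exact ⟨LinearMap.pi k, LinearMap.ext fun w => funext fun n => LinearMap.congr_fun (hk n) w⟩

theorem prodMap_id {j : X →ₗ[R] Y} {q : Y →ₗ[R] Z} (h : RelShortExact 𝒯 j q) :
    RelShortExact 𝒯 (LinearMap.inl R Y A ∘ₗ j) (q.prodMap LinearMap.id) where
  injective := LinearMap.inl_injective.comp h.injective
  exact := by
    rintro ⟨y, a⟩
    simp [h.exact y, eq_comm (a := a)]
  relEpi W hW g := by
    obtain ⟨k, hk⟩ := h.relEpi W hW (LinearMap.fst R Z A ∘ₗ g)
    exact ⟨k.prod (LinearMap.snd R Z A ∘ₗ g),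
      LinearMap.ext fun w => Prod.ext (LinearMap.congr_fun hk w) rfl⟩

theorem id_prodMap {j : X →ₗ[R] Y} {q : Y →ₗ[R] Z} (h : RelShortExact 𝒯 j q) :
    RelShortExact 𝒯 (LinearMap.id.prodMap j) (q ∘ₗ LinearMap.snd R A Y) where
  injective := Function.injective_id.prodMap h.injective
  exact := by
    rintro ⟨a, y⟩
    simp [h.exact y]
  relEpi := h.relEpi.comp (.of_rightInverse (LinearMap.snd_comp_inr R A Y))

theorem exists_pullback {j : X →ₗ[R] Y} {q : Y →ₗ[R] Z} {k : K →ₗ[R] P} {s : P →ₗ[R] Y}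
    (h : RelShortExact 𝒯 j q) (hs : RelShortExact 𝒯 k (q ∘ₗ s)) :
    ∃ l : K →ₗ[R] X × P, RelShortExact 𝒯 l (j.coprod s) := by
  have hqj (x : X) : q (j x) = 0 := h.exact.apply_apply_eq_zero x
  obtain ⟨x, hx⟩ := h.exists_lift (s ∘ₗ k) hs.exact.linearMap_comp_eq_zero
  refine ⟨(-x).prod k, ⟨fun a b hab => hs.injective (congrArg Prod.snd hab),
    LinearMap.exact_of_comp_of_mem_range ?_ ?_, fun W hW g => ?_⟩⟩
  · rw [LinearMap.coprod_comp_prod, LinearMap.comp_neg, hx, neg_add_cancel]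
  · rintro ⟨x', y⟩ hxy
    have hy : q (s y) = 0 := by simpa [hqj] using congrArg q hxy
    obtain ⟨z, rfl⟩ := (hs.exact y).1 hy
    have hx' : j (-x z) = j x' := by
      rw [map_neg, eq_comm, eq_neg_iff_add_eq_zero]
      exact (congrArg (j x' + ·) (LinearMap.congr_fun hx z)).trans hxy
    exact ⟨z, Prod.ext (h.injective hx') rfl⟩
  · obtain ⟨b, hb⟩ := hs.relEpi W hW (q ∘ₗ g)
    obtain ⟨a, ha⟩ := h.exists_lift (g - s ∘ₗ b) (by
      rw [LinearMap.comp_sub, ← LinearMap.comp_assoc, hb, sub_self])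
    exact ⟨a.prod b, by rw [LinearMap.coprod_comp_prod, ha, sub_add_cancel]⟩

theorem exists_pushout {j : X →ₗ[R] Y} {q : Y →ₗ[R] Z} {t : Y →ₗ[R] E} {r : E →ₗ[R] C}
    (h : RelShortExact 𝒯 j q) (ht : RelShortExact 𝒯 (t ∘ₗ j) r) :
    ∃ c : E × Z →ₗ[R] C, RelShortExact 𝒯 (t.prod q) c := by
  obtain ⟨z, hz⟩ := h.exists_desc (r ∘ₗ t) ht.exact.linearMap_comp_eq_zero
  have hqj (x : X) : q (j x) = 0 := h.exact.apply_apply_eq_zero x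
  refine ⟨r.coprod (-z), ⟨(injective_iff_map_eq_zero _).2 fun y hy => ?_,
    LinearMap.exact_of_comp_of_mem_range ?_ ?_,
    .of_comp (f := LinearMap.inl R E Z) (by rw [LinearMap.coprod_inl]; exact ht.relEpi)⟩⟩
  · obtain ⟨hty, hqy⟩ := Prod.ext_iff.1 hy
    obtain ⟨x, rfl⟩ := (h.exact y).1 hqy
    rw [(map_eq_zero_iff _ ht.injective).1 hty, map_zero]
  · rw [LinearMap.coprod_comp_prod, LinearMap.neg_comp, hz, add_neg_cancel]
  · rintro ⟨e, z'⟩ he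
    obtain ⟨y, rfl⟩ := h.relEpi.surjective z'
    have hr : r (e - t y) = 0 := by
      rw [map_sub, sub_eq_add_neg]
      exact (congrArg (r e + -·) (LinearMap.congr_fun hz y)).symm.trans he
    obtain ⟨x, hx⟩ := (ht.exact _).1 hr
    exact ⟨y + j x, Prod.ext (by simpa [add_comm, eq_sub_iff_add_eq] using hx) (by simp [hqj])⟩

theorem exists_ker_comp {k : K →ₗ[R] A} {f : A →ₗ[R] B} {l : L →ₗ[R] B} {g : B →ₗ[R] C}
    (hf : RelShortExact 𝒯 k f) (hg : RelShortExact 𝒯 l g) :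
    ∃ (u : K →ₗ[R] LinearMap.ker (g ∘ₗ f)) (v : LinearMap.ker (g ∘ₗ f) →ₗ[R] L),
      RelShortExact 𝒯 u v := by
  obtain ⟨u, hu⟩ := (ker (hg.relEpi.comp hf.relEpi)).exists_lift k (by
    rw [LinearMap.comp_assoc, hf.exact.linearMap_comp_eq_zero, LinearMap.comp_zero])
  obtain ⟨v, hv⟩ := hg.exists_lift (f ∘ₗ (LinearMap.ker (g ∘ₗ f)).subtype)
    (LinearMap.ext fun x => x.2)
  replace hu (x : K) : (u x : A) = k x := LinearMap.congr_fun hu x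
  replace hv (x : LinearMap.ker (g ∘ₗ f)) : l (v x) = f x := LinearMap.congr_fun hv x
  refine ⟨u, v, ⟨fun x y hxy => hf.injective (by rw [← hu, hxy, hu]), fun x => ?_,
    fun W hW w => ?_⟩⟩
  · rw [← map_eq_zero_iff l hg.injective, hv, hf.exact]
    simp only [Set.mem_range, Subtype.ext_iff, hu]
  · obtain ⟨a, ha⟩ := hf.relEpi W hW (l ∘ₗ w)
    have hga (x : W) : g (f (a x)) = 0 :=
      (congrArg g (LinearMap.congr_fun ha x)).trans (hg.exact.apply_apply_eq_zero _)
    exact ⟨a.codRestrict _ hga, LinearMap.ext fun x =>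
      hg.injective ((hv _).trans (LinearMap.congr_fun ha x))⟩

theorem exists_coker_comp {f : A →ₗ[R] B} {p : B →ₗ[R] P} {g : B →ₗ[R] C} {r : C →ₗ[R] L}
    (hf : RelShortExact 𝒯 f p) (hg : RelShortExact 𝒯 g r) :
    ∃ (u : P →ₗ[R] C ⧸ LinearMap.range (g ∘ₗ f)) (v : C ⧸ LinearMap.range (g ∘ₗ f) →ₗ[R] L),
      RelShortExact 𝒯 u v ∧ RelShortExact 𝒯 (g ∘ₗ f) (LinearMap.range (g ∘ₗ f)).mkQ := by
  set π := (LinearMap.range (g ∘ₗ f)).mkQ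
  have hπ : Function.Exact (g ∘ₗ f) π := (g ∘ₗ f).exact_map_mkQ_range
  obtain ⟨u, hu⟩ := hf.exists_desc (π ∘ₗ g) hπ.linearMap_comp_eq_zero
  obtain ⟨v, hv⟩ : ∃ v, v ∘ₗ π = r := ⟨Submodule.liftQ _ r (LinearMap.range_le_ker_iff.2 (by
    rw [← LinearMap.comp_assoc, hg.exact.linearMap_comp_eq_zero, LinearMap.zero_comp])),
    Submodule.liftQ_mkQ ..⟩
  have hu' (b : B) : u (p b) = π (g b) := LinearMap.congr_fun hu b
  have hv' (c : C) : v (π c) = r c := LinearMap.congr_fun hv c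
  have huv : RelShortExact 𝒯 u v := by
    refine ⟨(injective_iff_map_eq_zero u).2 fun x hx => ?_,
      LinearMap.exact_of_comp_of_mem_range ?_ fun x hx => ?_,
      .of_comp (f := π) (hv ▸ hg.relEpi)⟩
    · obtain ⟨b, rfl⟩ := hf.relEpi.surjective x
      obtain ⟨a, ha⟩ := (hπ _).1 ((hu' b).symm.trans hx)
      rw [← hg.injective ha]
      exact hf.exact.apply_apply_eq_zero a
    · refine LinearMap.ext fun x => ?_
      obtain ⟨b, rfl⟩ := hf.relEpi.surjective x
      exact (congrArg v (hu' b)).trans ((hv' _).trans (hg.exact.apply_apply_eq_zero b))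
    · obtain ⟨c, rfl⟩ := Submodule.mkQ_surjective _ x
      obtain ⟨b, rfl⟩ := (hg.exact c).1 ((hv' c).symm.trans hx)
      exact ⟨p b, hu' b⟩
  refine ⟨u, v, huv, hg.injective.comp hf.injective, hπ, fun W hW w => ?_⟩
  obtain ⟨c, hc⟩ := hg.relEpi W hW (v ∘ₗ w)
  obtain ⟨m, hm⟩ := huv.exists_lift (w - π ∘ₗ c) (by
    rw [LinearMap.comp_sub, ← LinearMap.comp_assoc, hv, hc, sub_self])
  obtain ⟨b, rfl⟩ := hf.relEpi W hW m
  refine ⟨c + g ∘ₗ b, ?_⟩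
  rw [LinearMap.comp_add, ← LinearMap.comp_assoc, ← hu, LinearMap.comp_assoc, hm,
    add_sub_cancel]

end RelShortExact

end RelativeHomologicalAlgebra

section GorensteinModules

variable {R} {𝒯 : ModuleCat.{u} R → Prop} {A B C K L M N P X Y Z : ModuleCat.{u} R}

/-- `K` is a syzygy of `M`, and `M` a cosyzygy of `K`, with respect to injective modules: there is
a `𝒯`-exact sequence `0 → K → E → M → 0` with `E` injective. -/
def IsInjectiveSyzygy (𝒯 : ModuleCat.{u} R → Prop) (K M : ModuleCat.{u} R) : Prop :=
  ∃ (E : ModuleCat.{u} R) (j : K →ₗ[R] E) (q : E →ₗ[R] M),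
    Module.Injective R E ∧ RelShortExact 𝒯 j q

theorem module_injective_prod {X Y : Type u} [AddCommGroup X] [AddCommGroup Y] [Module R X]
    [Module R Y] (hX : Module.Injective R X) (hY : Module.Injective R Y) :
    Module.Injective R (X × Y) := by
  refine ⟨fun S T _ _ _ _ f hf g => ?_⟩
  obtain ⟨h₁, e₁⟩ := hX.out f hf (LinearMap.fst R X Y ∘ₗ g)
  obtain ⟨h₂, e₂⟩ := hY.out f hf (LinearMap.snd R X Y ∘ₗ g)
  exact ⟨h₁.prod h₂, fun x => Prod.ext (e₁ x) (e₂ x)⟩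

namespace IsInjectiveSyzygy

theorem of_equiv_left (h : IsInjectiveSyzygy 𝒯 K M) (e : L ≃ₗ[R] K) :
    IsInjectiveSyzygy 𝒯 L M := by
  obtain ⟨E, j, q, hE, h⟩ := h
  exact ⟨E, _, q, hE, h.comp_equiv e⟩

theorem of_equiv_right (h : IsInjectiveSyzygy 𝒯 K M) (e : M ≃ₗ[R] N) :
    IsInjectiveSyzygy 𝒯 K N := by
  obtain ⟨E, j, q, hE, h⟩ := h
  exact ⟨E, j, _, hE, h.equiv_comp e⟩

theorem pi {ι : Type u} {K M : ι → ModuleCat.{u} R} (h : ∀ n, IsInjectiveSyzygy 𝒯 (K n) (M n)) :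
    IsInjectiveSyzygy 𝒯 (ModuleCat.of R (∀ n, K n)) (ModuleCat.of R (∀ n, M n)) := by
  choose E j q hE h using h
  exact ⟨ModuleCat.of R (∀ n, E n), _, _, .pi R (fun n => E n), .pi h⟩

theorem prod_injective (h : IsInjectiveSyzygy 𝒯 K M) (hX : Module.Injective R X) :
    IsInjectiveSyzygy 𝒯 K (ModuleCat.of R (M × X)) := by
  obtain ⟨E, j, q, hE, h⟩ := h
  exact ⟨ModuleCat.of R (E × X), _, _, module_injective_prod hE hX, h.prodMap_id⟩

theorem injective_prod (h : IsInjectiveSyzygy 𝒯 K M) (hX : Module.Injective R X) :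
    IsInjectiveSyzygy 𝒯 (ModuleCat.of R (X × K)) M := by
  obtain ⟨E, j, q, hE, h⟩ := h
  exact ⟨ModuleCat.of R (X × E), _, _, module_injective_prod hX hE, h.id_prodMap⟩

theorem exists_of_relShortExact_right {l : L →ₗ[R] B} {g : B →ₗ[R] C}
    (hK : IsInjectiveSyzygy 𝒯 K B) (hg : RelShortExact 𝒯 l g) :
    ∃ (D : ModuleCat.{u} R) (u : K →ₗ[R] D) (v : D →ₗ[R] L),
      RelShortExact 𝒯 u v ∧ IsInjectiveSyzygy 𝒯 D C := by
  obtain ⟨E, k, f, hE, hf⟩ := hK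
  obtain ⟨u, v, huv⟩ := hf.exists_ker_comp hg
  exact ⟨ModuleCat.of R (LinearMap.ker (g ∘ₗ f)), u, v, huv, E, _, _, hE,
    .ker (hg.relEpi.comp hf.relEpi)⟩

theorem exists_of_relShortExact_left {f : A →ₗ[R] B} {p : B →ₗ[R] P}
    (hL : IsInjectiveSyzygy 𝒯 B L) (hf : RelShortExact 𝒯 f p) :
    ∃ (D : ModuleCat.{u} R) (u : P →ₗ[R] D) (v : D →ₗ[R] L),
      RelShortExact 𝒯 u v ∧ IsInjectiveSyzygy 𝒯 A D := by
  obtain ⟨E, g, r, hE, hg⟩ := hL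
  obtain ⟨u, v, huv, hgf⟩ := hf.exists_coker_comp hg
  exact ⟨ModuleCat.of R (E ⧸ LinearMap.range (g ∘ₗ f)), u, v, huv, E, _, _, hE, hgf⟩

theorem horseshoe_syzygy (h𝒯 : ∀ E : ModuleCat.{u} R, Module.Injective R E → 𝒯 E)
    {j : X →ₗ[R] Y} {q : Y →ₗ[R] Z} (h : RelShortExact 𝒯 j q)
    (hX : IsInjectiveSyzygy 𝒯 K X) (hZ : IsInjectiveSyzygy 𝒯 L Z) :
    ∃ (D : ModuleCat.{u} R) (u : K →ₗ[R] D) (v : D →ₗ[R] L),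
      RelShortExact 𝒯 u v ∧ IsInjectiveSyzygy 𝒯 D Y := by
  obtain ⟨E, k, π, hE, hπ⟩ := hZ
  obtain ⟨s, rfl⟩ := h.relEpi E (.inl (h𝒯 E hE)) π
  obtain ⟨l, hl⟩ := h.exists_pullback hπ
  exact (hX.prod_injective hE).exists_of_relShortExact_right hl

theorem horseshoe_cosyzygy {j : X →ₗ[R] Y} {q : Y →ₗ[R] Z} (h : RelShortExact 𝒯 j q)
    (hX : IsInjectiveSyzygy 𝒯 X K) (hZ : IsInjectiveSyzygy 𝒯 Z L) :
    ∃ (D : ModuleCat.{u} R) (u : K →ₗ[R] D) (v : D →ₗ[R] L),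
      RelShortExact 𝒯 u v ∧ IsInjectiveSyzygy 𝒯 Y D := by
  obtain ⟨E, a, r, hE, ha⟩ := hX
  obtain ⟨t, rfl⟩ := hE.extension_property R E X Y j h.injective a
  obtain ⟨c, hc⟩ := h.exists_pushout ha
  exact (hZ.injective_prod hE).exists_of_relShortExact_left hc

end IsInjectiveSyzygy

/-- A class of modules each member of which has a syzygy and a cosyzygy in the class, in the sense
of `IsInjectiveSyzygy`. The Gorenstein injective modules relative to `𝒯` form the largest such
class, so closure properties are proved by coinduction. -/
def IsSyzygyStable (𝒯 𝒞 : ModuleCat.{u} R → Prop) : Prop :=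
  ∀ M, 𝒞 M → (∃ K, 𝒞 K ∧ IsInjectiveSyzygy 𝒯 K M) ∧ ∃ L, 𝒞 L ∧ IsInjectiveSyzygy 𝒯 M L

theorem exists_int_seq {α : Type*} {p : α → Prop} {r : α → α → Prop}
    (hleft : ∀ y, p y → ∃ x, p x ∧ r x y) (hright : ∀ x, p x → ∃ y, p y ∧ r x y)
    {a : α} (ha : p a) : ∃ G : ℤ → α, G 0 = a ∧ ∀ n, r (G n) (G (n + 1)) := by
  choose! f hfp hf using hleft
  choose! g hgp hg using hright
  have hfa (n : ℕ) : p (f^[n] a) := Function.Iterate.rec p ha hfp n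
  have hga (n : ℕ) : p (g^[n] a) := Function.Iterate.rec p ha hgp n
  let G : ℤ → α
    | .ofNat n => g^[n] a
    | .negSucc n => f^[n + 1] a
  refine ⟨G, rfl, ?_⟩
  rintro (n | (_ | n))
  · change r (g^[n] a) (g^[n + 1] a)
    rw [Function.iterate_succ_apply']
    exact hg _ (hga n)
  · exact hf a ha
  · change r (f^[n + 2] a) (f^[n + 1] a)
    rw [Function.iterate_succ_apply' f (n + 1)]
    exact hf _ (hfa (n + 1))

theorem gorensteinRelInjective_of_isInjectiveSyzygy {G : ℤ → ModuleCat.{u} R}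
    (hG : ∀ n, IsInjectiveSyzygy 𝒯 (G n) (G (n + 1))) : GorensteinRelInjective R 𝒯 (G 1) := by
  choose I j q hI h using hG
  have hjq (n : ℤ) : Function.Exact (j (n + 1) ∘ₗ q n) (q (n + 1)) :=
    (h n).relEpi.surjective.comp_exact_iff_exact.2 (h (n + 1)).exact
  refine ⟨I, fun n => j (n + 1) ∘ₗ q n, q 0, ⟨hI, fun n =>
    (h (n + 1 + 1)).injective.comp_exact_iff_exact.2 (hjq n), fun W hW n g => ⟨fun hg => ?_, ?_⟩⟩,
    (h 0).relEpi.surjective, hjq (-1)⟩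
  · have hqg : q (n + 1) ∘ₗ g = 0 := LinearMap.ext fun w =>
      (map_eq_zero_iff _ (h (n + 1 + 1)).injective).1 (LinearMap.congr_fun hg w)
    obtain ⟨k, rfl⟩ := (h (n + 1)).exists_lift g hqg
    obtain ⟨l, rfl⟩ := (h n).relEpi W (.inl hW) k
    exact ⟨l, rfl⟩
  · rintro ⟨l, rfl⟩
    exact LinearMap.ext fun w =>
      (congrArg (j (n + 1 + 1)) ((hjq n).apply_apply_eq_zero (l w))).trans (map_zero _)

theorem IsSyzygyStable.gorensteinRelInjective {𝒞 : ModuleCat.{u} R → Prop}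
    (h𝒞 : IsSyzygyStable 𝒯 𝒞) (hM : 𝒞 M) : GorensteinRelInjective R 𝒯 M := by
  obtain ⟨G, rfl, hG⟩ := exists_int_seq (fun M hM => (h𝒞 M hM).1) (fun M hM => (h𝒞 M hM).2) hM
  exact gorensteinRelInjective_of_isInjectiveSyzygy (G := fun n => G (n - 1)) fun n => by
    simpa using hG (n - 1)

theorem IsTotallyAcyclicInjComplex.isInjectiveSyzygy_ker {I : ℤ → ModuleCat.{u} R}
    {d : ∀ n : ℤ, I n →ₗ[R] I (n + 1)} (h : IsTotallyAcyclicInjComplex R 𝒯 I d) (n : ℤ) :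
    IsInjectiveSyzygy 𝒯 (ModuleCat.of R (LinearMap.ker (d n)))
      (ModuleCat.of R (LinearMap.ker (d (n + 1)))) := by
  obtain ⟨hI, hd, hHom⟩ := h
  let d' : I n →ₗ[R] LinearMap.ker (d (n + 1)) :=
    (d n).codRestrict _ (hd n).apply_apply_eq_zero
  have hd' : Function.Surjective d' := fun y =>
    ((hd n y).1 y.2).imp fun _ hx => Subtype.ext hx
  refine ⟨I n, (LinearMap.ker (d n)).subtype, d', hI n, Subtype.val_injective, ?_, ?_⟩
  · exact LinearMap.exact_iff.2
      (((d n).ker_codRestrict _ _).trans (Submodule.range_subtype _).symm)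
  · rintro W (hW | hW) g
    · obtain ⟨k, hk⟩ := (hHom W hW n ((LinearMap.ker (d (n + 1))).subtype ∘ₗ g)).1
        (LinearMap.ext fun w => (g w).2)
      exact ⟨k, LinearMap.ext fun w => Subtype.ext (LinearMap.congr_fun hk w)⟩
    · exact Module.projective_lifting_property d' g hd'

theorem gorensteinRelInjective_isSyzygyStable :
    IsSyzygyStable 𝒯 (GorensteinRelInjective R 𝒯) := by
  rintro M ⟨I, d, π, hI, hπ, hdπ⟩
  let 𝒞 (X : ModuleCat.{u} R) : Prop := ∃ n, Nonempty (X ≃ₗ[R] LinearMap.ker (d n))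
  have hker (n : ℤ) : 𝒞 (ModuleCat.of R (LinearMap.ker (d n))) := ⟨n, ⟨.refl R _⟩⟩
  have h𝒞 : IsSyzygyStable 𝒯 𝒞 := by
    rintro X ⟨n, ⟨e⟩⟩
    obtain ⟨m, rfl⟩ : ∃ m, n = m + 1 := ⟨n - 1, (sub_add_cancel n 1).symm⟩
    exact ⟨⟨_, hker m, (hI.isInjectiveSyzygy_ker m).of_equiv_right e.symm⟩,
      ⟨_, hker (m + 1 + 1), (hI.isInjectiveSyzygy_ker (m + 1)).of_equiv_left e⟩⟩
  have hM : 𝒞 M := by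
    have hker_eq : LinearMap.ker π = LinearMap.ker (d 0) :=
      hdπ.linearMap_ker_eq.trans (hI.2.1 (-1)).linearMap_ker_eq.symm
    exact ⟨1, ⟨(π.quotKerEquivOfSurjective hπ).symm ≪≫ₗ Submodule.quotEquivOfEq _ _ hker_eq ≪≫ₗ
      (d 0).quotKerEquivRange ≪≫ₗ LinearEquiv.ofEq _ _ (hI.2.1 0).linearMap_ker_eq.symm⟩⟩
  obtain ⟨⟨K, hK, hKM⟩, L, hL, hML⟩ := h𝒞 M hM
  exact ⟨⟨K, h𝒞.gorensteinRelInjective hK, hKM⟩, L, h𝒞.gorensteinRelInjective hL, hML⟩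

namespace GorensteinRelInjective

theorem exists_syzygy (hM : GorensteinRelInjective R 𝒯 M) :
    ∃ K, GorensteinRelInjective R 𝒯 K ∧ IsInjectiveSyzygy 𝒯 K M :=
  (gorensteinRelInjective_isSyzygyStable M hM).1

theorem exists_cosyzygy (hM : GorensteinRelInjective R 𝒯 M) :
    ∃ L, GorensteinRelInjective R 𝒯 L ∧ IsInjectiveSyzygy 𝒯 M L :=
  (gorensteinRelInjective_isSyzygyStable M hM).2

theorem of_syzygy_of_cosyzygy (hK : GorensteinRelInjective R 𝒯 K)
    (hL : GorensteinRelInjective R 𝒯 L) (hKM : IsInjectiveSyzygy 𝒯 K M)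
    (hML : IsInjectiveSyzygy 𝒯 M L) : GorensteinRelInjective R 𝒯 M := by
  have h𝒞 : IsSyzygyStable 𝒯 fun X => GorensteinRelInjective R 𝒯 X ∨ X = M := by
    rintro X (hX | rfl)
    · exact ⟨hX.exists_syzygy.imp fun _ h => h.imp_left .inl,
        hX.exists_cosyzygy.imp fun _ h => h.imp_left .inl⟩
    · exact ⟨⟨K, .inl hK, hKM⟩, L, .inl hL, hML⟩
  exact h𝒞.gorensteinRelInjective (.inr rfl)

theorem of_equiv (hM : GorensteinRelInjective R 𝒯 M) (e : M ≃ₗ[R] N) :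
    GorensteinRelInjective R 𝒯 N := by
  obtain ⟨K, hK, hKM⟩ := hM.exists_syzygy
  obtain ⟨L, hL, hML⟩ := hM.exists_cosyzygy
  exact of_syzygy_of_cosyzygy hK hL (hKM.of_equiv_right e) (hML.of_equiv_left e.symm)

theorem pi {ι : Type u} {M : ι → ModuleCat.{u} R} (hM : ∀ n, GorensteinRelInjective R 𝒯 (M n)) :
    GorensteinRelInjective R 𝒯 (ModuleCat.of R (∀ n, M n)) := by
  let 𝒞 (X : ModuleCat.{u} R) : Prop := ∃ N : ι → ModuleCat.{u} R,
    (∀ n, GorensteinRelInjective R 𝒯 (N n)) ∧ X = ModuleCat.of R (∀ n, N n)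
  have h𝒞 : IsSyzygyStable 𝒯 𝒞 := by
    rintro _ ⟨N, hN, rfl⟩
    choose K hK hKN using fun n => (hN n).exists_syzygy
    choose L hL hNL using fun n => (hN n).exists_cosyzygy
    exact ⟨⟨_, ⟨K, hK, rfl⟩, .pi hKN⟩, _, ⟨L, hL, rfl⟩, .pi hNL⟩
  exact h𝒞.gorensteinRelInjective ⟨M, hM, rfl⟩

theorem of_relShortExact (h𝒯 : ∀ E : ModuleCat.{u} R, Module.Injective R E → 𝒯 E)
    {j : X →ₗ[R] Y} {q : Y →ₗ[R] Z} (h : RelShortExact 𝒯 j q)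
    (hX : GorensteinRelInjective R 𝒯 X) (hZ : GorensteinRelInjective R 𝒯 Z) :
    GorensteinRelInjective R 𝒯 Y := by
  let 𝒞 (Y : ModuleCat.{u} R) : Prop :=
    ∃ (X Z : ModuleCat.{u} R) (j : X →ₗ[R] Y) (q : Y →ₗ[R] Z), RelShortExact 𝒯 j q ∧
      GorensteinRelInjective R 𝒯 X ∧ GorensteinRelInjective R 𝒯 Z
  have h𝒞 : IsSyzygyStable 𝒯 𝒞 := by
    rintro Y ⟨X, Z, j, q, h, hX, hZ⟩
    obtain ⟨K, hK, hKX⟩ := hX.exists_syzygy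
    obtain ⟨K', hK', hKZ⟩ := hZ.exists_syzygy
    obtain ⟨D, u, v, huv, hD⟩ := IsInjectiveSyzygy.horseshoe_syzygy h𝒯 h hKX hKZ
    obtain ⟨L, hL, hXL⟩ := hX.exists_cosyzygy
    obtain ⟨L', hL', hZL⟩ := hZ.exists_cosyzygy
    obtain ⟨D', u', v', huv', hD'⟩ := IsInjectiveSyzygy.horseshoe_cosyzygy h hXL hZL
    exact ⟨⟨D, ⟨K, K', u, v, huv, hK, hK'⟩, hD⟩, D', ⟨L, L', u', v', huv', hL, hL'⟩, hD'⟩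
  exact h𝒞.gorensteinRelInjective ⟨X, Z, j, q, h, hX, hZ⟩

theorem of_prod_right (h𝒯 : ∀ E : ModuleCat.{u} R, Module.Injective R E → 𝒯 E)
    (hN : GorensteinRelInjective R 𝒯 N)
    (hNA : GorensteinRelInjective R 𝒯 (ModuleCat.of R (N × A))) :
    GorensteinRelInjective R 𝒯 A := by
  obtain ⟨K, hK, hKNA⟩ := hNA.exists_syzygy
  obtain ⟨L, hL, hNAL⟩ := hNA.exists_cosyzygy
  obtain ⟨D, u, v, huv, hDA⟩ := hKNA.exists_of_relShortExact_right
    (RelShortExact.inl_snd (X := N) (Y := A))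
  obtain ⟨D', u', v', huv', hAD'⟩ := hNAL.exists_of_relShortExact_left
    (RelShortExact.inr_fst (X := N) (Y := A))
  exact of_syzygy_of_cosyzygy (of_relShortExact h𝒯 huv hK hN) (of_relShortExact h𝒯 huv' hN hL)
    hDA hAD'

end GorensteinRelInjective

/-- The Eilenberg swindle `(B ⊕ A)^ℕ ≃ (B ⊕ A)^ℕ ⊕ A`: split off the first copy of `A` and shift
the remaining ones. -/
def eilenbergSwindle (R B A : Type*) [Semiring R] [AddCommMonoid B] [AddCommMonoid A]
    [Module R B] [Module R A] : (ℕ → B × A) ≃ₗ[R] (ℕ → B × A) × A where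
  toFun f := (fun n => ((f n).1, (f (n + 1)).2), (f 0).2)
  invFun x
    | 0 => ((x.1 0).1, x.2)
    | n + 1 => ((x.1 (n + 1)).1, (x.1 n).2)
  map_add' _ _ := rfl
  map_smul' _ _ := rfl
  left_inv f := by
    funext n
    cases n <;> rfl
  right_inv x := by
    refine Prod.ext (funext fun n => ?_) rfl
    cases n <;> rfl

theorem gorensteinWeakInjective_direct_summand_general
    (h𝒯 : ∀ E : ModuleCat.{u} R, Module.Injective R E → 𝒯 E)
    (i : A →ₗ[R] M) (p : M →ₗ[R] A) (hpi : p.comp i = LinearMap.id)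
    (hM : GorensteinRelInjective R 𝒯 M) : GorensteinRelInjective R 𝒯 A := by
  have hN : GorensteinRelInjective R 𝒯 (ModuleCat.of R (ℕ → M)) :=
    (GorensteinRelInjective.pi fun _ : ULift.{u} ℕ => hM).of_equiv
      (LinearEquiv.funCongrLeft R M Equiv.ulift).symm
  let split : M ≃ₗ[R] LinearMap.ker p × A :=
    (p.exact_subtype_ker_map.splitSurjectiveEquiv Subtype.val_injective ⟨i, hpi⟩).1
  let power : (ℕ → M) ≃ₗ[R] (ℕ → LinearMap.ker p × A) := LinearEquiv.piCongrRight fun _ => split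
  exact .of_prod_right h𝒯 hN (hN.of_equiv
    (power ≪≫ₗ eilenbergSwindle R (LinearMap.ker p) A ≪≫ₗ power.symm.prodCongr (.refl R A)))

theorem extVanish_succ_of_injective (n : ℕ) (N W : ModuleCat.{u} R) [Module.Injective R W] :
    ExtVanish R (n + 1) N W := by
  have : Injective W := Module.injective_object_of_injective_module R W
  let P := projectiveResolution N
  refine ModuleCat.subsingleton_of_isZero (Limits.IsZero.of_iso ?_ (P.isoExt (n + 1) W))
  rw [← HomologicalComplex.exactAt_iff_isZero_homology,
    HomologicalComplex.exactAt_iff' _ n (n + 1) (n + 2) (by simp) (by simp),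
    ShortComplex.moduleCat_exact_iff]
  intro f hf
  have hP := (HomologicalComplex.exactAt_iff' _ (n + 2) (n + 1) n (by simp) (by simp)).1
    (P.complex_exactAt_succ n)
  exact ⟨hP.descToInjective f hf, hP.comp_descToInjective f hf⟩

theorem weakInjective_of_injective (W : ModuleCat.{u} R) [Module.Injective R W] :
    WeakInjective R W :=
  fun N _ => extVanish_succ_of_injective 0 N W

end GorensteinModules

/-- The class of Gorenstein weak injective modules is closed under direct summands. -/
theorem gorensteinWeakInjective_direct_summand (M A : ModuleCat.{u} R)
    (i : A →ₗ[R] M) (p : M →ₗ[R] A) (hpi : p.comp i = LinearMap.id)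
    (hM : GorensteinWeakInjective R M) : GorensteinWeakInjective R A := by
  exact gorensteinWeakInjective_direct_summand_general
    (fun E _ => weakInjective_of_injective E) i p hpi hM
end
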